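/- Let p ≥ 0 be an integer and let H_p denote the ℂ-vector space of harmonic homogeneous polynomials of degree p in three variables, i.e. homogeneous P ∈ ℂ[X₀, X₁, X₂] of degree p with ∂²P/∂X₀² + ∂²P/∂X₁² + ∂²P/∂X₂² = 0. Let σ be the algebra automorphism determined by σ(X₀) = −X₀, σ(X₁) = −X₁, σ(X₂) = X₂. Then dim { P ∈ H_p : σ(P) = P } = 2⌊p/2⌋ + 1 and dim { P ∈ H_p : σ(P) = −P } = 2p − 2⌊p/2⌋. In particular, the dimension of the (+1)-eigenspace is p + 1 when p is even and p when p is odd. -/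

import Mathlib

/-!
Write a polynomial as `∑ f_c(X₀, X₁) X₂ ^ c`. It is harmonic iff
`(c + 1) (c + 2) f_{c+2} = -(∂₀² + ∂₁²) f_c` for all `c`, so a harmonic polynomial of degree `p`
is the same thing as an arbitrary pair of initial data `f_0`, `f_1`, homogeneous of degrees `p` and
`p - 1`. The recursion preserves the parity of `c`, and on a monomial of degree `p` the involution
`σ` acts by `(-1) ^ (p - c)`. Hence each eigenspace of `σ` consists of the harmonic polynomials
involving only exponents `c ≡ e` modulo `2`, for one `e ∈ {0, 1}` (`inf_eigenspace_eq`), and it is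
isomorphic to the space of the `f_e` alone (`initialData_bijective`), of dimension `p + 1 - e`.
The eigenvalue `1` belongs to `e = p % 2` and the eigenvalue `-1` to the other parity.
-/

open MvPolynomial

/-- The formal Laplacian `∂²/∂X₀² + ∂²/∂X₁² + ∂²/∂X₂²` on `ℂ[X₀,X₁,X₂]`,
as a linear map. -/
noncomputable def formalLaplacian :
    MvPolynomial (Fin 3) ℂ →ₗ[ℂ] MvPolynomial (Fin 3) ℂ :=
  (pderiv 0).toLinearMap ∘ₗ (pderiv 0).toLinearMap
    + (pderiv 1).toLinearMap ∘ₗ (pderiv 1).toLinearMap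
    + (pderiv 2).toLinearMap ∘ₗ (pderiv 2).toLinearMap

/-- The involutive algebra endomorphism `σ` of `ℂ[X₀,X₁,X₂]` determined by
`σ(X₀) = -X₀`, `σ(X₁) = -X₁`, `σ(X₂) = X₂`. -/
noncomputable def sigmaInv : MvPolynomial (Fin 3) ℂ →ₐ[ℂ] MvPolynomial (Fin 3) ℂ :=
  aeval ![-X 0, -X 1, X 2]

/-- The space `H_p` of harmonic homogeneous polynomials of degree `p` in three
variables. -/
noncomputable def harmonicHomog (p : ℕ) : Submodule ℂ (MvPolynomial (Fin 3) ℂ) :=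
  homogeneousSubmodule (Fin 3) ℂ p ⊓ LinearMap.ker formalLaplacian

/-- The exponent of the monomial `X₀ ^ a * X₁ ^ b * X₂ ^ c`. -/
noncomputable def expo (a b c : ℕ) : Fin 3 →₀ ℕ := Finsupp.equivFunOnFinite.symm ![a, b, c]

@[simp] theorem expo_zero (a b c : ℕ) : expo a b c 0 = a := rfl
@[simp] theorem expo_one (a b c : ℕ) : expo a b c 1 = b := rfl
@[simp] theorem expo_two (a b c : ℕ) : expo a b c 2 = c := rfl

theorem eq_expo (m : Fin 3 →₀ ℕ) : m = expo (m 0) (m 1) (m 2) := by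
  ext j; fin_cases j <;> rfl

theorem coeff_formalLaplacian (P : MvPolynomial (Fin 3) ℂ) (a b c : ℕ) :
    coeff (expo a b c) (formalLaplacian P) =
      (a + 1) * (a + 2) * coeff (expo (a + 2) b c) P
      + (b + 1) * (b + 2) * coeff (expo a (b + 2) c) P
      + (c + 1) * (c + 2) * coeff (expo a b (c + 2)) P := by
  have h0 : expo a b c + Finsupp.single 0 1 + Finsupp.single 0 1 = expo (a + 2) b c := by
    ext j; fin_cases j <;> simp
  have h1 : expo a b c + Finsupp.single 1 1 + Finsupp.single 1 1 = expo a (b + 2) c := by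
    ext j; fin_cases j <;> simp
  have h2 : expo a b c + Finsupp.single 2 1 + Finsupp.single 2 1 = expo a b (c + 2) := by
    ext j; fin_cases j <;> simp
  simp only [formalLaplacian, LinearMap.add_apply, LinearMap.comp_apply, Derivation.coeFn_coe,
    coeff_add, coeff_pderiv, h0, h1, h2]
  simp
  ring

theorem coeff_sigmaInv (P : MvPolynomial (Fin 3) ℂ) (m : Fin 3 →₀ ℕ) :
    coeff m (sigmaInv P) = (-1) ^ (m 0 + m 1) * coeff m P := by
  induction P using MvPolynomial.induction_on' with
  | monomial u a =>
    have h : sigmaInv (monomial u a) = monomial u ((-1) ^ (u 0 + u 1) * a) := by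
      rw [sigmaInv, aeval_monomial, monomial_eq, Finsupp.prod_fintype _ _ (by simp),
        Finsupp.prod_fintype _ _ (by simp)]
      simp only [Fin.prod_univ_three, Matrix.cons_val_zero, Matrix.cons_val_one,
        Matrix.cons_val, algebraMap_eq, C_mul, C_pow, C_neg, C_1]
      rw [neg_pow (X 0 : MvPolynomial (Fin 3) ℂ), neg_pow (X 1 : MvPolynomial (Fin 3) ℂ), pow_add]
      ring
    rw [h, coeff_monomial, coeff_monomial]
    split_ifs with hu
    · rw [hu]
    · simp
  | add p q hp hq => simp [hp, hq, mul_add]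

theorem isHomogeneous_iff_expo (P : MvPolynomial (Fin 3) ℂ) (p : ℕ) :
    P.IsHomogeneous p ↔ ∀ a b c, a + b + c ≠ p → coeff (expo a b c) P = 0 := by
  have hdeg : ∀ a b c, (expo a b c).degree = a + b + c := fun a b c => by
    simp [Finsupp.degree_eq_sum, Fin.sum_univ_three]
  constructor
  · intro h a b c hne
    exact h.coeff_eq_zero (by rwa [hdeg])
  · intro h m hm
    rw [eq_expo m] at hm ⊢
    by_contra hne
    have hw := DFunLike.congr_fun Finsupp.degree_eq_weight_one (expo (m 0) (m 1) (m 2))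
    rw [hdeg] at hw
    replace hne : m 0 + m 1 + m 2 ≠ p := fun h' => hne (hw.symm.trans h')
    exact hm (h _ _ _ hne)

/-- The degree `p` harmonic polynomials in which only exponents of `X₂` congruent to `e`
modulo `2` occur. -/
noncomputable def harmonicParity (p e : ℕ) : Submodule ℂ (MvPolynomial (Fin 3) ℂ) where
  carrier := {P | P ∈ harmonicHomog p ∧ ∀ a b c, c % 2 ≠ e → coeff (expo a b c) P = 0}
  add_mem' := fun hP hQ => ⟨add_mem hP.1 hQ.1, fun a b c h => by
    rw [coeff_add, hP.2 a b c h, hQ.2 a b c h, add_zero]⟩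
  zero_mem' := ⟨zero_mem _, by simp⟩
  smul_mem' := fun r P hP => ⟨Submodule.smul_mem _ r hP.1, fun a b c h => by
    rw [coeff_smul, hP.2 a b c h, smul_zero]⟩

theorem mem_harmonicParity {p e : ℕ} {P : MvPolynomial (Fin 3) ℂ} :
    P ∈ harmonicParity p e ↔
      (∀ a b c, a + b + c ≠ p → coeff (expo a b c) P = 0) ∧
      (∀ a b c : ℕ, ((a : ℂ) + 1) * (a + 2) * coeff (expo (a + 2) b c) P
        + (b + 1) * (b + 2) * coeff (expo a (b + 2) c) P
        + (c + 1) * (c + 2) * coeff (expo a b (c + 2)) P = 0) ∧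
      (∀ a b c, c % 2 ≠ e → coeff (expo a b c) P = 0) := by
  have hΔ : formalLaplacian P = 0 ↔ ∀ a b c, coeff (expo a b c) (formalLaplacian P) = 0 := by
    constructor
    · intro h a b c; rw [h, coeff_zero]
    · intro h; ext m; rw [eq_expo m, h, coeff_zero]
  simp only [coeff_formalLaplacian] at hΔ
  rw [← hΔ, ← isHomogeneous_iff_expo, ← and_assoc]
  rfl

/-- On `X₀ ^ a * X₁ ^ b * X₂ ^ c` with `a + b + c = p` the involution acts by
`(-1) ^ (a + b) = (-1) ^ (p + c)`, so the exponents allowed in the eigenspace are `c ≡ e` mod `2`. -/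
theorem inf_eigenspace_eq (p e : ℕ) (he : e < 2) :
    harmonicHomog p ⊓ Module.End.eigenspace sigmaInv.toLinearMap ((-1) ^ (p + e))
      = harmonicParity p e := by
  ext P
  change (P ∈ harmonicHomog p ∧ _) ↔ (P ∈ harmonicHomog p ∧ _)
  refine and_congr_right fun hP => ?_
  have hhom := (isHomogeneous_iff_expo P p).1 hP.1
  have hsig : P ∈ Module.End.eigenspace sigmaInv.toLinearMap ((-1) ^ (p + e)) ↔
      ∀ a b c, (-1) ^ (a + b) * coeff (expo a b c) P
        = (-1) ^ (p + e) * coeff (expo a b c) P := by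
    rw [Module.End.mem_eigenspace_iff]
    constructor
    · intro h a b c
      have := congrArg (coeff (expo a b c)) h
      simpa [coeff_sigmaInv] using this
    · intro h
      ext m
      rw [eq_expo m]
      simpa [coeff_sigmaInv] using h (m 0) (m 1) (m 2)
  refine hsig.trans (forall_congr' fun a => forall_congr' fun b => forall_congr' fun c => ?_)
  by_cases hd : a + b + c = p
  · subst hd
    rcases Nat.even_or_odd (c + e) with hce | hce
    · have : c % 2 = e := by rw [Nat.even_iff] at hce; omega
      rw [add_assoc, pow_add _ (a + b) (c + e), hce.neg_one_pow, mul_one]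
      simp [this]
    · have : c % 2 ≠ e := by rw [Nat.odd_iff] at hce; omega
      rw [add_assoc, pow_add _ (a + b) (c + e), hce.neg_one_pow]
      rcases neg_one_pow_eq_or ℂ (a + b) with h | h <;>
        simp [h, this, self_eq_neg, neg_eq_self]
  · simp [hhom a b c hd]

/-- The coefficient of `X₀ ^ a * X₁ ^ b * X₂ ^ c` forced by harmonicity, when the coefficients
with `c = e` are given by `v` and those with `c = 1 - e` vanish (here `e < 2`). -/
noncomputable def extCoeff (e : ℕ) (v : ℕ → ℂ) : ℕ → ℕ → ℕ → ℂ
  | 0, a, _ => if e = 0 then v a else 0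
  | 1, a, _ => if e = 1 then v a else 0
  | c + 2, a, b => -(((a : ℂ) + 1) * (a + 2) * extCoeff e v c (a + 2) b
      + (b + 1) * (b + 2) * extCoeff e v c a (b + 2)) / ((c + 1) * (c + 2))

theorem extCoeff_parity (e : ℕ) (v : ℕ → ℂ) (c : ℕ) :
    ∀ a b, c % 2 ≠ e → extCoeff e v c a b = 0 := by
  induction c using Nat.twoStepInduction with
  | zero => intro a b h; rw [extCoeff, if_neg (by omega)]
  | one => intro a b h; rw [extCoeff, if_neg (by omega)]
  | more c ih _ =>
    intro a b h
    have hc : c % 2 ≠ e := by omega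
    rw [extCoeff, ih _ _ hc, ih _ _ hc]
    simp

/-- The degree `p` polynomial with coefficients `extCoeff e v`. -/
noncomputable def extPoly (p e : ℕ) (v : ℕ → ℂ) : MvPolynomial (Fin 3) ℂ :=
  ∑ m ∈ Finset.finsuppAntidiag Finset.univ p, monomial m (extCoeff e v (m 2) (m 0) (m 1))

theorem coeff_extPoly (p e : ℕ) (v : ℕ → ℂ) (a b c : ℕ) :
    coeff (expo a b c) (extPoly p e v) = if a + b + c = p then extCoeff e v c a b else 0 := by
  rw [extPoly, coeff_sum]
  simp only [coeff_monomial]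
  rw [Finset.sum_ite_eq']
  simp [Finset.mem_finsuppAntidiag, Fin.sum_univ_three]

theorem extPoly_mem (p e : ℕ) (v : ℕ → ℂ) : extPoly p e v ∈ harmonicParity p e := by
  rw [mem_harmonicParity]
  simp only [coeff_extPoly]
  refine ⟨fun a b c h => if_neg h, fun a b c => ?_, fun a b c h => ?_⟩
  · by_cases hd : a + b + c + 2 = p
    · rw [if_pos (by omega), if_pos (by omega), if_pos (by omega), extCoeff]
      have h1 : (c : ℂ) + 1 ≠ 0 := by exact_mod_cast Nat.succ_ne_zero c
      have h2 : (c : ℂ) + 2 ≠ 0 := by exact_mod_cast Nat.succ_ne_zero (c + 1)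
      field_simp
      ring
    · rw [if_neg (by omega), if_neg (by omega), if_neg (by omega)]
      simp
  · rw [extCoeff_parity e v c a b h, ite_self]

/-- A harmonic polynomial whose coefficients with `X₂`-exponent `e` vanish, and which has only
`X₂`-exponents congruent to `e`, is zero: the Laplace equation expresses the coefficients at
`X₂`-exponent `c + 2` through those at `c`. -/
theorem coeff_eq_zero_of_initial {p e : ℕ} (he : e < 2) {P : MvPolynomial (Fin 3) ℂ}
    (hP : P ∈ harmonicParity p e) (h0 : ∀ a b, coeff (expo a b e) P = 0) (c : ℕ) :
    ∀ a b, coeff (expo a b c) P = 0 := by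
  obtain ⟨-, hΔ, hpar⟩ := mem_harmonicParity.1 hP
  induction c using Nat.twoStepInduction with
  | zero =>
    intro a b
    by_cases h : e = 0
    · subst h; exact h0 a b
    · exact hpar a b 0 (by omega)
  | one =>
    intro a b
    by_cases h : e = 1
    · subst h; exact h0 a b
    · exact hpar a b 1 (by omega)
  | more c ih _ =>
    intro a b
    have h := hΔ a b c
    rw [ih, ih, mul_zero, mul_zero, zero_add, zero_add] at h
    have h1 : (c : ℂ) + 1 ≠ 0 := by exact_mod_cast Nat.succ_ne_zero c
    have h2 : (c : ℂ) + 2 ≠ 0 := by exact_mod_cast Nat.succ_ne_zero (c + 1)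
    exact (mul_eq_zero.1 h).resolve_left (mul_ne_zero h1 h2)

/-- The initial data of `P`: the coefficients of `X₀ ^ i * X₁ ^ (p - e - i) * X₂ ^ e` for
`0 ≤ i ≤ p - e`. The index set is empty if `p < e`. -/
noncomputable def initialData (p e : ℕ) : harmonicParity p e →ₗ[ℂ] (Fin (p + 1 - e) → ℂ) where
  toFun P i := coeff (expo i (p - e - i) e) (P : MvPolynomial (Fin 3) ℂ)
  map_add' P Q := by ext i; simp
  map_smul' r P := by ext i; simp

theorem initialData_bijective (p e : ℕ) (he : e < 2) :
    Function.Bijective (initialData p e) := by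
  constructor
  · rw [← LinearMap.ker_eq_bot, LinearMap.ker_eq_bot']
    rintro ⟨P, hP⟩ h
    have h0 : ∀ a b, coeff (expo a b e) P = 0 := by
      intro a b
      by_cases hd : a + b + e = p
      · have := congrFun h ⟨a, by omega⟩
        change coeff (expo a (p - e - a) e) P = 0 at this
        rwa [show p - e - a = b by omega] at this
      · exact (mem_harmonicParity.1 hP).1 a b e hd
    ext m
    rw [eq_expo m]
    simpa using coeff_eq_zero_of_initial he hP h0 (m 2) (m 0) (m 1)
  · intro v
    refine ⟨⟨extPoly p e (fun a => if h : a < p + 1 - e then v ⟨a, h⟩ else 0),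
      extPoly_mem _ _ _⟩, ?_⟩
    ext ⟨i, hi⟩
    change coeff (expo i (p - e - i) e) (extPoly p e _) = _
    rw [coeff_extPoly, if_pos (by omega)]
    interval_cases e <;> simp only [extCoeff, if_true] <;> exact dif_pos hi

theorem finrank_inf_eigenspace (p e : ℕ) (he : e < 2) :
    Module.finrank ℂ
      ↥(harmonicHomog p ⊓ Module.End.eigenspace sigmaInv.toLinearMap ((-1) ^ (p + e)))
      = p + 1 - e := by
  rw [inf_eigenspace_eq p e he,
    (LinearEquiv.ofBijective _ (initialData_bijective p e he)).finrank_eq, Module.finrank_fin_fun]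

/-- on harmonic homogeneous polynomials of degree `p`, the
`(+1)`-eigenspace of `σ` has dimension `2⌊p/2⌋ + 1`, the `(-1)`-eigenspace has
dimension `2p - 2⌊p/2⌋`; in particular the `(+1)`-eigenspace has dimension
`p + 1` for `p` even and `p` for `p` odd. -/
theorem stmt2 (p : ℕ) :
    Module.finrank ℂ
        ↥(harmonicHomog p ⊓ Module.End.eigenspace (sigmaInv.toLinearMap) 1)
      = 2 * (p / 2) + 1 ∧
    Module.finrank ℂ
        ↥(harmonicHomog p ⊓ Module.End.eigenspace (sigmaInv.toLinearMap) (-1))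
      = 2 * p - 2 * (p / 2) ∧
    (Even p →
      Module.finrank ℂ
          ↥(harmonicHomog p ⊓ Module.End.eigenspace (sigmaInv.toLinearMap) 1)
        = p + 1) ∧
    (Odd p →
      Module.finrank ℂ
          ↥(harmonicHomog p ⊓ Module.End.eigenspace (sigmaInv.toLinearMap) 1)
        = p) := by
  have hplus := finrank_inf_eigenspace p (p % 2) (by omega)
  have hminus := finrank_inf_eigenspace p (1 - p % 2) (by omega)
  rw [Even.neg_one_pow (by rw [Nat.even_iff]; omega)] at hplus
  rw [Odd.neg_one_pow (by rw [Nat.odd_iff]; omega)] at hminus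
  rw [hplus, hminus, Nat.even_iff, Nat.odd_iff]
  omega
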